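/- arXiv:2303.05920 — 4 statements merged into one kernel-verified Lean document; each statement's English description precedes it below -/
import Mathlib

section
/- Let M = (V, I) be a matroid on a finite ground set V with rank function rank (rank(X) is the maximum size of an independent subset of X), let S ∈ I, let u ∈ S, and let A ⊆ V \ S. Then there exists an element v ∈ A with S − u + v ∈ I if and only if rank((S \ {u}) ∪ A) ≥ |S|. -/
/-- A matroid on a finite ground set `V`, given by its family of independent sets. -/
structure FinMatroid (V : Type*) [DecidableEq V] [Fintype V] where
  Indep : Finset V → Prop
  indep_empty : Indep ∅
  indep_subset : ∀ ⦃S T : Finset V⦄, Indep S → T ⊆ S → Indep T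
  indep_aug : ∀ ⦃S T : Finset V⦄, Indep S → Indep T → T.card < S.card →
    ∃ x ∈ S \ T, Indep (insert x T)

/-- The rank of a set `X`: the maximum size of an independent subset of `X`. -/
noncomputable def FinMatroid.rank {V : Type*} [DecidableEq V] [Fintype V]
    (M : FinMatroid V) (X : Finset V) : ℕ :=
  sSup {n : ℕ | ∃ T ⊆ X, M.Indep T ∧ T.card = n}

namespace FinMatroid

variable {V : Type*} [DecidableEq V] [Fintype V] (M : FinMatroid V)

theorem isGreatest_rank (X : Finset V) :
    IsGreatest {n : ℕ | ∃ T ⊆ X, M.Indep T ∧ T.card = n} (M.rank X) := by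
  have hne : {n : ℕ | ∃ T ⊆ X, M.Indep T ∧ T.card = n}.Nonempty :=
    ⟨0, ∅, X.empty_subset, M.indep_empty, Finset.card_empty⟩
  have hbdd : BddAbove {n : ℕ | ∃ T ⊆ X, M.Indep T ∧ T.card = n} := by
    refine ⟨X.card, ?_⟩
    rintro _ ⟨T, hTX, -, rfl⟩
    exact Finset.card_le_card hTX
  exact ⟨Nat.sSup_mem hne hbdd, fun _ hn => le_csSup hbdd hn⟩

variable {M} {I X : Finset V}

theorem Indep.card_le_rank (hI : M.Indep I) (hIX : I ⊆ X) : I.card ≤ M.rank X :=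
  (M.isGreatest_rank X).2 ⟨I, hIX, hI, rfl⟩

theorem Indep.exists_mem_sdiff_indep_insert_iff (hI : M.Indep I) (hIX : I ⊆ X) :
    (∃ v ∈ X \ I, M.Indep (insert v I)) ↔ I.card < M.rank X := by
  constructor
  · rintro ⟨v, hv, hvI⟩
    obtain ⟨hvX, hv_notMem⟩ := Finset.mem_sdiff.mp hv
    calc
      I.card < (insert v I).card := Finset.card_lt_card (Finset.ssubset_insert hv_notMem)
      _ ≤ M.rank X := hvI.card_le_rank (Finset.insert_subset hvX hIX)
  · intro hlt
    obtain ⟨T, hTX, hT, hT_card⟩ := (M.isGreatest_rank X).1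
    obtain ⟨v, hv, hvI⟩ := M.indep_aug hT hI (hT_card ▸ hlt)
    exact ⟨v, Finset.sdiff_subset_sdiff hTX subset_rfl hv, hvI⟩

end FinMatroid

/-- Correctness criterion of the rank-oracle binary-search procedure `FindInEdge`:
there is `v ∈ A` with `S − u + v` independent iff `rank((S \ {u}) ∪ A) ≥ |S|`. -/
theorem findInEdge_criterion {V : Type*} [DecidableEq V] [Fintype V]
    (M : FinMatroid V) (S : Finset V) (hS : M.Indep S) (u : V) (hu : u ∈ S)
    (A : Finset V) (hA : ∀ a ∈ A, a ∉ S) :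
    (∃ v ∈ A, M.Indep (insert v (S.erase u))) ↔ S.card ≤ M.rank ((S.erase u) ∪ A) := by
  have hI : M.Indep (S.erase u) := M.indep_subset hS (S.erase_subset u)
  have hdisj : Disjoint (S.erase u) A :=
    Finset.disjoint_right.mpr fun a ha hmem => hA a ha (Finset.mem_of_mem_erase hmem)
  have hsdiff : (S.erase u ∪ A) \ S.erase u = A := Finset.union_sdiff_cancel_left hdisj
  rw [← Finset.card_erase_add_one hu, Nat.add_one_le_iff,
    ← hI.exists_mem_sdiff_indep_insert_iff Finset.subset_union_left, hsdiff]
end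

section
/- Let s, v₁, v₂, …, v_{l−1}, t be a shortest (s, t)-path in the exchange graph G(S) relative to a common independent set S ∈ I' ∩ I''. Then S' = S △ {v₁, …, v_{l−1}} = S + v₁ − v₂ + ⋯ − v_{l−2} + v_{l−1} is a common independent set, S' ∈ I' ∩ I'', and |S'| = |S| + 1. -/
/-- `reachIn Adj n x y` : there is a directed walk with exactly `n` edges from `x` to `y`. -/
def reachIn {α : Type*} (Adj : α → α → Prop) : ℕ → α → α → Prop
  | 0, x, y => x = y
  | n + 1, x, y => ∃ z, Adj x z ∧ reachIn Adj n z y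

/-- Distance (number of edges of a shortest directed path) from `x` to `y`; `⊤` if none. -/
noncomputable def ddist {α : Type*} (Adj : α → α → Prop) (x y : α) : ℕ∞ :=
  sInf {n : ℕ∞ | ∃ m : ℕ, n = (m : ℕ∞) ∧ reachIn Adj m x y}

/-- Vertices of the exchange graph: the ground elements plus a source `src` and a sink `snk`. -/
inductive XVert (V : Type*) where
  | elt : V → XVert V
  | src : XVert V
  | snk : XVert V

/-- The exchange graph `G(S)` of two matroids relative to a common independent set `S`. -/
def exchangeAdj {V : Type*} [DecidableEq V] [Fintype V]
    (M₁ M₂ : FinMatroid V) (S : Finset V) : XVert V → XVert V → Prop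
  | XVert.elt a, XVert.elt b =>
      (a ∈ S ∧ b ∉ S ∧ M₁.Indep (insert b (S.erase a))) ∨
      (a ∉ S ∧ b ∈ S ∧ M₂.Indep (insert a (S.erase b)))
  | XVert.src, XVert.elt b => b ∉ S ∧ M₁.Indep (insert b S)
  | XVert.elt a, XVert.snk => a ∉ S ∧ M₂.Indep (insert a S)
  | _, _ => False

/-! Let `v₁, …, v_{l-1}` be the inner vertices of the path. Suppose `S △ {v₁, …, v_{l-1}}` contained
a circuit `C` of the first matroid, let `b` be the first vertex of the path in `C \ S`, and let `u`
be its predecessor on the path. Write `S - u` for `S` without `u`, which is `S` itself if `u` is the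
source. A vertex outside `S` spanned by `S - u` is exactly one to which `u` has no edge; since the
path has no shortcuts, this holds for all later vertices outside `S`. So `C - b` is spanned by
`S - u`, hence so is `b`, contradicting the edge from `u` to `b`. For the second matroid take the
last vertex of the path in `C \ S` and its successor instead. The path alternates between `S` and
its complement, and `v₁` and `v_{l-1}` lie in the complement, whence the cardinality. -/

theorem indep_union_image_of_triangular {α ι : Type*} {M : Matroid α} (r : ι → ι → Prop)
    [IsWellOrder ι r] {I : Set α} {b : ι → α} {F : ι → Set α} {s : Set ι} (hI : M.Indep I)
    (hbE : ∀ i ∈ s, b i ∈ M.E) (hIF : ∀ i ∈ s, I ⊆ M.closure (F i))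
    (hb : ∀ i ∈ s, b i ∉ M.closure (F i))
    (hbF : ∀ i ∈ s, ∀ j ∈ s, r i j → b j ∈ M.closure (F i)) :
    M.Indep (I ∪ b '' s) := by
  rw [Matroid.indep_iff_forall_subset_not_isCircuit
    (Set.union_subset hI.subset_ground (Set.image_subset_iff.2 hbE))]
  intro C hC hcirc
  have hmeets : {i ∈ s | b i ∈ C}.Nonempty := by
    by_contra hempty
    refine hcirc.not_indep (hI.subset fun x hx => (hC hx).resolve_right ?_)
    rintro ⟨i, hi, rfl⟩
    exact hempty ⟨i, hi, hx⟩
  obtain ⟨i, ⟨his, hiC⟩, hfirst⟩ := (IsWellFounded.wf (r := r)).has_min _ hmeets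
  have hspan : C \ {b i} ⊆ M.closure (F i) := by
    rintro x ⟨hxC, hxi⟩
    obtain hxI | ⟨j, hjs, rfl⟩ := hC hxC
    · exact hIF i his hxI
    · obtain hij | rfl | hji := trichotomous_of r i j
      · exact hbF i his j hjs hij
      · exact absurd rfl hxi
      · exact absurd hji (hfirst j ⟨hjs, hxC⟩)
  exact hb i his (Matroid.closure_subset_closure_of_subset_closure hspan
    (hcirc.mem_closure_sdiff_singleton_of_mem hiC))

section Paths

variable {α : Type*} {Adj : α → α → Prop}

theorem reachIn_of_isChain : ∀ {l : List α} {x y : α}, (x :: l).IsChain Adj →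
    (x :: l).getLast? = some y → reachIn Adj l.length x y
  | [], _, _, _, hlast => by simpa [reachIn] using hlast
  | z :: _, _, _, hl, hlast => by
    rw [List.isChain_cons_cons] at hl
    exact ⟨z, hl.1, reachIn_of_isChain hl.2 (by simpa using hlast)⟩

theorem ddist_add_one_le_length {l : List α} {x y : α} (hl : l.IsChain Adj)
    (hx : l.head? = some x) (hy : l.getLast? = some y) : ddist Adj x y + 1 ≤ l.length := by
  obtain ⟨l, rfl⟩ := List.head?_eq_some_iff.1 hx
  rw [List.length_cons, Nat.cast_add_one]
  gcongr
  exact sInf_le ⟨_, rfl, reachIn_of_isChain hl hy⟩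

/-- No edge of `Adj` joins a vertex of the list `p` to a vertex more than one step further on. -/
def NoShortcut (Adj : α → α → Prop) (p : List α) : Prop :=
  ∀ i j (hi : i < p.length) (hj : j < p.length), Adj p[i] p[j] → j ≤ i + 1

theorem noShortcut_of_length_le {p : List α} {x y : α} (hp : p.IsChain Adj)
    (hx : p.head? = some x) (hy : p.getLast? = some y) (hmin : p.length ≤ ddist Adj x y + 1) :
    NoShortcut Adj p := by
  intro i j hi hj hij
  have hshort : (p.take (i + 1) ++ p.drop j).IsChain Adj :=
    List.isChain_append.2 ⟨hp.take _, hp.drop _, by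
      simpa [List.getLast?_take, List.getElem?_eq_getElem, hi, hj] using hij⟩
  have hle : p.length ≤ (p.take (i + 1) ++ p.drop j).length := by
    exact_mod_cast hmin.trans (ddist_add_one_le_length hshort
      (by simp [List.head?_take, hx]) (by simp [List.getLast?_drop, hj, hy]))
  simp only [List.length_append, List.length_take, List.length_drop] at hle
  omega

end Paths

theorem count_false_eq_of_isChain_ne : ∀ {b : Bool} {l : List Bool},
    (b :: (l ++ [true])).IsChain (· ≠ ·) → l.count false = l.count true + b.toNat
  | b, [], h => by cases b <;> simp at h ⊢
  | b, c :: _, h => by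
    rw [List.cons_append, List.isChain_cons_cons] at h
    have ih := count_false_eq_of_isChain_ne h.2
    cases b <;> cases c <;> simp_all

section Vertices

variable {V : Type*} {b : V} {vs : List V}

/-- The list of all vertices of the path `s, v₁, …, v_{l-1}, t` with inner vertices `vs`. -/
def sourceSinkPath (vs : List V) : List (XVert V) :=
  .src :: (vs.map .elt ++ [.snk])

@[simp]
theorem length_sourceSinkPath : (sourceSinkPath vs).length = vs.length + 2 := by
  simp [sourceSinkPath]

theorem head?_sourceSinkPath : (sourceSinkPath vs).head? = some .src := rfl

theorem getLast?_sourceSinkPath : (sourceSinkPath vs).getLast? = some .snk := by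
  rw [sourceSinkPath, ← List.cons_append, List.getLast?_concat]

theorem getElem_succ_sourceSinkPath (i : Fin vs.length) :
    (sourceSinkPath vs)[i.1 + 1]'(by simp) = .elt (vs.get i) := by
  simp [sourceSinkPath]

theorem elt_mem_sourceSinkPath : .elt b ∈ sourceSinkPath vs ↔ b ∈ vs := by
  simp [sourceSinkPath]

/-- The set `S` without the vertex `u` of the exchange graph; the source and the sink
stand for no element, so removing them leaves `S` as it is. -/
def XVert.removeFrom [DecidableEq V] (S : Finset V) : XVert V → Finset V
  | elt a => S.erase a
  | _ => S

theorem XVert.mem_removeFrom [DecidableEq V] {S : Finset V} {u : XVert V} {x : V} :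
    x ∈ u.removeFrom S ↔ x ∈ S ∧ elt x ≠ u := by
  cases u <;> simp [removeFrom, and_comm]

/-- The side of a vertex in the bipartition of the exchange graph: `true` for `S`, with which the
source and the sink are grouped, and `false` for the complement of `S`. -/
def XVert.side [DecidableEq V] (S : Finset V) : XVert V → Bool
  | elt a => a ∈ S
  | _ => true

end Vertices

section ExchangeGraph

variable {V : Type*} [DecidableEq V] [Fintype V]

/-- A `FinMatroid` as a matroid in the sense of Mathlib, with ground set the whole type. -/
def FinMatroid.toMatroid (M : FinMatroid V) : Matroid V :=
  (IndepMatroid.ofFinset Set.univ M.Indep M.indep_empty (fun _ _ hJ hIJ => M.indep_subset hJ hIJ)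
    (fun I J hI hJ hIJ => by
      obtain ⟨x, hx, hxI⟩ := M.indep_aug hJ hI hIJ
      exact ⟨x, (Finset.mem_sdiff.1 hx).1, (Finset.mem_sdiff.1 hx).2, hxI⟩)
    (fun _ _ => Set.subset_univ _)).matroid

@[simp]
theorem FinMatroid.toMatroid_E (M : FinMatroid V) : M.toMatroid.E = Set.univ := rfl

@[simp]
theorem FinMatroid.toMatroid_indep (M : FinMatroid V) {T : Finset V} :
    M.toMatroid.Indep T ↔ M.Indep T := by
  rw [toMatroid, IndepMatroid.matroid_Indep, IndepMatroid.ofFinset_indep]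

theorem FinMatroid.notMem_closure_iff (M : FinMatroid V) {T : Finset V} {b : V}
    (hT : M.Indep T) (hb : b ∉ T) : b ∉ M.toMatroid.closure T ↔ M.Indep (insert b T) := by
  rw [(M.toMatroid_indep.2 hT).notMem_closure_iff_of_notMem (by simpa using hb),
    ← Finset.coe_insert, M.toMatroid_indep]

variable {M₁ M₂ : FinMatroid V} {S : Finset V} {b : V} {u w : XVert V} {vs : List V}

theorem exchangeAdj_elt_right (hS : M₁.Indep S) (hb : b ∉ S) :
    exchangeAdj M₁ M₂ S u (.elt b) ↔
      u ∈ insert .src (XVert.elt '' S) ∧ b ∉ M₁.toMatroid.closure (u.removeFrom S) := by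
  have hsub : u.removeFrom S ⊆ S := fun _ hx => (XVert.mem_removeFrom.1 hx).1
  rw [M₁.notMem_closure_iff (M₁.indep_subset hS hsub) (fun h => hb (hsub h))]
  cases u <;> simp [exchangeAdj, XVert.removeFrom, hb]

theorem exchangeAdj_elt_left (hS : M₂.Indep S) (hb : b ∉ S) :
    exchangeAdj M₁ M₂ S (.elt b) u ↔
      u ∈ insert .snk (XVert.elt '' S) ∧ b ∉ M₂.toMatroid.closure (u.removeFrom S) := by
  have hsub : u.removeFrom S ⊆ S := fun _ hx => (XVert.mem_removeFrom.1 hx).1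
  rw [M₂.notMem_closure_iff (M₂.indep_subset hS hsub) (fun h => hb (hsub h))]
  cases u <;> simp [exchangeAdj, XVert.removeFrom, hb]

theorem FinMatroid.indep_symmDiff_of_removeFrom {M : FinMatroid V}
    (r : Fin vs.length → Fin vs.length → Prop) [IsWellOrder _ r] {u : Fin vs.length → XVert V}
    (hS : M.Indep S) (hu : ∀ i, u i ∈ sourceSinkPath vs)
    (hb : ∀ i, vs.get i ∉ S → vs.get i ∉ M.toMatroid.closure ((u i).removeFrom S))
    (hr : ∀ i, vs.get i ∉ S → ∀ j, vs.get j ∉ S → r i j →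
      vs.get j ∈ M.toMatroid.closure ((u i).removeFrom S)) :
    M.Indep (symmDiff S vs.toFinset) := by
  have hunion : (symmDiff S vs.toFinset : Finset V) =
      ((S \ vs.toFinset : Finset V) : Set V) ∪ vs.get '' {i | vs.get i ∉ S} := by
    ext x
    simp only [Finset.coe_symmDiff, Set.mem_symmDiff, Set.mem_union, Finset.mem_coe,
      Finset.mem_sdiff, List.mem_toFinset, List.mem_iff_get, Set.mem_image, Set.mem_ofPred_eq]
    grind
  rw [← M.toMatroid_indep, hunion]
  refine indep_union_image_of_triangular r (F := fun i => (u i).removeFrom S)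
    (M.toMatroid_indep.2 (M.indep_subset hS Finset.sdiff_subset)) (by simp) ?_ (by simpa using hb)
    (by simpa using hr)
  intro i _ x hx
  obtain ⟨hxS, hxvs⟩ := Finset.mem_sdiff.1 hx
  refine M.toMatroid.mem_closure_of_mem' (Finset.mem_coe.2 (XVert.mem_removeFrom.2 ⟨hxS, ?_⟩))
  intro hxu
  exact hxvs (List.mem_toFinset.2 (elt_mem_sourceSinkPath.1 (hxu ▸ hu i)))

theorem indep_left_symmDiff_of_noShortcut (hS : M₁.Indep S)
    (hchain : (sourceSinkPath vs).IsChain (exchangeAdj M₁ M₂ S))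
    (hmin : NoShortcut (exchangeAdj M₁ M₂ S) (sourceSinkPath vs)) :
    M₁.Indep (symmDiff S vs.toFinset) := by
  have hpred : ∀ i : Fin vs.length,
      exchangeAdj M₁ M₂ S ((sourceSinkPath vs)[i.1]'(by simp; omega)) (.elt (vs.get i)) := by
    intro i
    rw [← getElem_succ_sourceSinkPath]
    exact List.isChain_iff_getElem.1 hchain i _
  refine M₁.indep_symmDiff_of_removeFrom (· < ·) hS (fun i => List.getElem_mem _)
    (fun i hi => ((exchangeAdj_elt_right hS hi).1 (hpred i)).2) ?_
  intro i hi j hj hij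
  by_contra hjcl
  have hskip := (exchangeAdj_elt_right (M₂ := M₂) hS hj).2
    ⟨((exchangeAdj_elt_right hS hi).1 (hpred i)).1, hjcl⟩
  rw [← getElem_succ_sourceSinkPath] at hskip
  have hle := hmin _ _ _ _ hskip
  omega

theorem indep_right_symmDiff_of_noShortcut (hS : M₂.Indep S)
    (hchain : (sourceSinkPath vs).IsChain (exchangeAdj M₁ M₂ S))
    (hmin : NoShortcut (exchangeAdj M₁ M₂ S) (sourceSinkPath vs)) :
    M₂.Indep (symmDiff S vs.toFinset) := by
  have hsucc : ∀ i : Fin vs.length,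
      exchangeAdj M₁ M₂ S (.elt (vs.get i)) ((sourceSinkPath vs)[i.1 + 2]'(by simp)) := by
    intro i
    rw [← getElem_succ_sourceSinkPath]
    exact List.isChain_iff_getElem.1 hchain (i + 1) _
  refine M₂.indep_symmDiff_of_removeFrom (· > ·) hS (fun i => List.getElem_mem _)
    (fun i hi => ((exchangeAdj_elt_left hS hi).1 (hsucc i)).2) ?_
  intro i hi j hj hij
  by_contra hjcl
  have hskip := (exchangeAdj_elt_left (M₁ := M₁) hS hj).2
    ⟨((exchangeAdj_elt_left hS hi).1 (hsucc i)).1, hjcl⟩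
  rw [← getElem_succ_sourceSinkPath] at hskip
  have hle := hmin _ _ _ _ hskip
  omega

theorem side_ne_of_exchangeAdj (h : exchangeAdj M₁ M₂ S u w) : u.side S ≠ w.side S := by
  cases u <;> cases w <;> simp only [exchangeAdj] at h <;> simp [XVert.side] <;> tauto

theorem card_sdiff_eq_card_inter_add_one (hnd : vs.Nodup)
    (hchain : (sourceSinkPath vs).IsChain (exchangeAdj M₁ M₂ S)) :
    (vs.toFinset \ S).card = (vs.toFinset ∩ S).card + 1 := by
  have hsides : ((sourceSinkPath vs).map (XVert.side S)).IsChain (· ≠ ·) :=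
    (List.isChain_map _).2 (hchain.imp fun _ _ => side_ne_of_exchangeAdj)
  have hcount : (vs.map (fun a => decide (a ∈ S))).count false =
      (vs.map (fun a => decide (a ∈ S))).count true + 1 :=
    count_false_eq_of_isChain_ne (b := true)
      (by simpa [sourceSinkPath, XVert.side, Function.comp_def] using hsides)
  have hcard (p : V → Bool) : {a ∈ vs.toFinset | p a}.card = vs.countP p := by
    rw [← List.toFinset_filter, List.toFinset_card_of_nodup (hnd.filter _),
      List.countP_eq_length_filter]
  rw [Finset.sdiff_eq_filter, ← Finset.filter_mem_eq_inter]
  simpa [List.count, List.countP_map, Function.comp_def, ← hcard] using hcount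

theorem card_symmDiff_eq_card_add_one (hnd : vs.Nodup)
    (hchain : (sourceSinkPath vs).IsChain (exchangeAdj M₁ M₂ S)) :
    (symmDiff S vs.toFinset).card = S.card + 1 := by
  have hdisj : Disjoint (S \ vs.toFinset) (vs.toFinset \ S) := disjoint_sdiff_sdiff
  rw [symmDiff_def, Finset.sup_eq_union, Finset.card_union_of_disjoint hdisj,
    card_sdiff_eq_card_inter_add_one hnd hchain, Finset.inter_comm, ← add_assoc,
    Finset.card_sdiff_add_card_inter]

end ExchangeGraph

/-- Augmenting along a shortest `(s,t)`-path `s, v₁, …, v_{l−1}, t` in the exchange graph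
yields the common independent set `S △ {v₁, …, v_{l−1}}` of size `|S| + 1`. -/
theorem shortest_augmenting_path_exchange {V : Type*} [DecidableEq V] [Fintype V]
    (M₁ M₂ : FinMatroid V) (S : Finset V) (hS₁ : M₁.Indep S) (hS₂ : M₂.Indep S)
    (vs : List V) (hne : vs ≠ []) (hnd : vs.Nodup)
    (hchain : List.Chain' (exchangeAdj M₁ M₂ S)
      (XVert.src :: (vs.map XVert.elt ++ [XVert.snk])))
    (hshort : ddist (exchangeAdj M₁ M₂ S) XVert.src XVert.snk = ((vs.length + 1 : ℕ) : ℕ∞)) :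
    M₁.Indep (symmDiff S vs.toFinset) ∧ M₂.Indep (symmDiff S vs.toFinset) ∧
      (symmDiff S vs.toFinset).card = S.card + 1 := by
  have hlen : ((sourceSinkPath vs).length : ℕ∞) ≤
      ddist (exchangeAdj M₁ M₂ S) .src .snk + 1 := by
    rw [hshort, length_sourceSinkPath]
    norm_cast
  have hmin : NoShortcut (exchangeAdj M₁ M₂ S) (sourceSinkPath vs) :=
    noShortcut_of_length_le hchain head?_sourceSinkPath getLast?_sourceSinkPath hlen
  exact ⟨indep_left_symmDiff_of_noShortcut hS₁ hchain hmin,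
    indep_right_symmDiff_of_noShortcut hS₂ hchain hmin, card_symmDiff_eq_card_add_one hnd hchain⟩
end

section
/- Let M_1 = (V, I_1), …, M_k = (V, I_k) be k matroids over a common finite ground set V, let P = s, v₁, …, v_{l−1}, t_j be a shortest (s, T)-path in the compressed exchange graph G(S_1, …, S_k) relative to a partition (S_1, …, S_k) of S with S_i ∈ I_i, and let (S'_1, …, S'_k) be the partition obtained by augmenting along P. Then for every vertex v ∈ {v₁, …, v_{l−1}} on the path P, the distance from s to v strictly increases: d'(s, v) > d(s, v), where d and d' denote distances in G(S_1, …, S_k) and G(S'_1, …, S'_k) respectively. -/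
/-- `S` is partitionable w.r.t. the matroids `M i`: it can be partitioned into
sets `P i` with `P i` independent in `M i`. -/
def Partitionable {V ι : Type*} [DecidableEq V] [Fintype V] [DecidableEq ι] [Fintype ι]
    (M : ι → FinMatroid V) (S : Finset V) : Prop :=
  ∃ P : ι → Finset V, (∀ i, (M i).Indep (P i)) ∧
    (∀ i j, i ≠ j → Disjoint (P i) (P j)) ∧ Finset.univ.biUnion P = S

/-- Vertices of the compressed exchange graph: ground elements, a source `src`,
and one sink `snk i` for each index `i`. -/
inductive CVert (V ι : Type*) where
  | elt : V → CVert V ι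
  | src : CVert V ι
  | snk : ι → CVert V ι

/-- The compressed exchange graph `G(S₁, …, S_k)` relative to the partition `P`. -/
def compAdj {V ι : Type*} [DecidableEq V] [Fintype V] [DecidableEq ι] [Fintype ι]
    (M : ι → FinMatroid V) (P : ι → Finset V) : CVert V ι → CVert V ι → Prop
  | CVert.elt v, CVert.elt u =>
      ∃ i, u ∈ P i ∧ ¬ (M i).Indep (insert v (P i)) ∧
        (M i).Indep (insert v ((P i).erase u))
  | CVert.src, CVert.elt v => v ∉ Finset.univ.biUnion P
  | CVert.elt v, CVert.snk i => v ∉ P i ∧ (M i).Indep (insert v (P i))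
  | _, _ => False

/-- The result of the procedure `Update`: augmenting the partition `P` along the path
`s, v₁, …, v_{l−1}, t_j`. -/
def updatePartition {V ι : Type*} [DecidableEq V] [DecidableEq ι]
    (P : ι → Finset V) (π : V → ι) (vs : List V) (hne : vs ≠ []) (j : ι) :
    ι → Finset V := fun i =>
  ((P i) \ (vs.tail.filter (fun v => π v = i)).toFinset)
    ∪ (((vs.zip vs.tail).filter (fun p => π p.2 = i)).map Prod.fst).toFinset
    ∪ (if i = j then {vs.getLast hne} else ∅)

/-!
Let `d` be the distance from the source in the exchange graph of `P` and let `l` be its distance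
to the sinks. The function `min d (l - 1) + 1_Q`, where `Q` is the set of path vertices, is a
potential of the new exchange graph: it grows by at most one along every edge, so it bounds the
new distances from below, and on `Q` it equals `d + 1`.

The potential property is a statement about a single matroid. Pull an element of the old part `I`
back along fundamental circuits: a circuit through a path vertex `u` consists of its predecessor on
the path and of elements of `I` that are at most as far away as `u`, and `u` is the only path vertex
at its distance. By induction on the distance, every element of `I` at distance at most `r` is
spanned by the elements of the new part `J` with `d + 1_Q ≤ r`. Hence if `v` is spanned by `I`, its
fundamental circuit in `J` stays among the elements with `d + 1_Q ≤ d v + 1`. If `v` is not spanned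
by `I`, then `v` is adjacent to a sink and `d v ≥ l - 1`.
-/

namespace FinMatroid

variable {V : Type*} [DecidableEq V] [Fintype V] (M : FinMatroid V)

/-- The Mathlib matroid, with ground set all of `V`, that has the same independent sets as `M`. -/
def toMatroid_s13 : Matroid V :=
  (IndepMatroid.ofFinset Set.univ M.Indep M.indep_empty
    (fun _ _ hJ hIJ ↦ M.indep_subset hJ hIJ)
    (fun _ _ hI hJ hcard ↦ by
      obtain ⟨x, hx, hxI⟩ := M.indep_aug hJ hI hcard
      exact ⟨x, (Finset.mem_sdiff.1 hx).1, (Finset.mem_sdiff.1 hx).2, hxI⟩)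
    (fun _ _ ↦ Set.subset_univ _)).matroid

@[simp]
lemma toMatroid_E_s13 : M.toMatroid_s13.E = Set.univ := rfl

@[simp]
lemma toMatroid_indep_coe_iff {A : Finset V} : M.toMatroid_s13.Indep (A : Set V) ↔ M.Indep A := by
  simp [toMatroid_s13]

variable {M} {A : Finset V} {u v : V}

lemma indep_insert_iff_notMem_closure (hA : M.Indep A) (hv : v ∉ A) :
    M.Indep (insert v A) ↔ v ∉ M.toMatroid_s13.closure A := by
  have hA' : M.toMatroid_s13.Indep A := M.toMatroid_indep_coe_iff.2 hA
  rw [hA'.notMem_closure_iff_of_notMem (by simpa using hv), ← M.toMatroid_indep_coe_iff,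
    Finset.coe_insert]

lemma not_indep_insert_iff_mem_closure_sdiff (hA : M.Indep A) :
    ¬ M.Indep (insert v A) ↔ v ∈ M.toMatroid_s13.closure A \ A := by
  by_cases hv : v ∈ A
  · simp [hv, hA]
  · simp [hv, indep_insert_iff_notMem_closure hA hv]

lemma mem_fundCircuit_iff_indep_insert_erase (hA : M.Indep A)
    (hv : v ∈ M.toMatroid_s13.closure A \ A) (hu : u ∈ A) :
    u ∈ M.toMatroid_s13.fundCircuit v A ↔ M.Indep (insert v (A.erase u)) := by
  have hvu : v ≠ u := fun h ↦ hv.2 (h ▸ hu)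
  rw [(M.toMatroid_indep_coe_iff.2 hA).mem_fundCircuit_iff hv.1 hv.2, ← Finset.coe_insert,
    ← Finset.coe_erase, Finset.erase_insert_of_ne hvu, M.toMatroid_indep_coe_iff]

end FinMatroid

section SingleMatroid

variable {α : Type*} {N : Matroid α} {I J Q : Set α} {δ : α → ℕ∞} {u v x : α} {r : ℕ∞}

lemma indep_of_subset_closure_of_encard_le (hI : N.Indep I) (hIJ : I ⊆ N.closure J)
    (hJ : J.Finite) (hcard : J.encard ≤ I.encard) : N.Indep J := by
  rw [Matroid.indep_iff_eRk_eq_encard_of_finite hJ]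
  refine le_antisymm (N.eRk_le_encard J) (hcard.trans ?_)
  exact (hI.encard_le_eRk_of_subset hIJ).trans_eq (N.eRk_closure_eq J)

lemma mem_closure_of_fundCircuit_sdiff_subset (hI : N.Indep I) (hv : v ∈ N.closure I \ I)
    (hx : x ∈ N.fundCircuit v I) (hsub : N.fundCircuit v I \ {x} ⊆ N.closure J) :
    x ∈ N.closure J :=
  N.closure_subset_closure_of_subset_closure hsub
    ((hI.fundCircuit_isCircuit hv.1 hv.2).mem_closure_sdiff_singleton_of_mem hx)

lemma mem_of_mem_fundCircuit_of_mem_closure (hxJ : x ∈ N.closure I) (hIJ : I ⊆ J)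
    (hu : u ∈ N.fundCircuit x J) (hux : u ≠ x) : u ∈ I := by
  rw [N.fundCircuit_eq_sInter (N.closure_subset_closure hIJ hxJ)] at hu
  exact (hu.resolve_left hux) I ⟨hIJ, hxJ⟩

/-- The effect on one part of augmenting along a shortest path with vertex set `Q`: the independent
set `I` becomes `J`, and `δ` is the distance from the source. An exchange edge from `v` to `u` is
expressed by membership of `u` in the fundamental circuit of `v` with respect to `I`. -/
structure ShortestExchange (N : Matroid α) (I J Q : Set α) (δ : α → ℕ∞) : Prop where
  indep : N.Indep I
  sdiff_subset : I \ Q ⊆ J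
  injOn : Q.InjOn δ
  le_add_one : ∀ v ∈ N.closure I \ I, ∀ u ∈ I, u ∈ N.fundCircuit v I → δ u ≤ δ v + 1
  exists_pred : ∀ u ∈ I ∩ Q, ∃ v ∈ J ∩ Q,
    v ∈ N.closure I \ I ∧ u ∈ N.fundCircuit v I ∧ δ u = δ v + 1

namespace ShortestExchange

lemma mem_closure_of_mem (h : ShortestExchange N I J Q δ) (hx : x ∈ I) (hxr : δ x ≤ r) :
    x ∈ N.closure {y ∈ J | δ y + Q.indicator 1 y ≤ r} := by
  induction hd : δ x using WellFoundedLT.induction generalizing x with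
  | ind d ih =>
    subst hd
    by_cases hxQ : x ∈ Q
    · obtain ⟨v, ⟨hvJ, hvQ⟩, hv, hxv, hδ⟩ := h.exists_pred x ⟨hx, hxQ⟩
      refine mem_closure_of_fundCircuit_sdiff_subset h.indep hv hxv fun u hu ↦ ?_
      obtain ⟨huv, hux : u ≠ x⟩ := hu
      obtain rfl | huI := N.fundCircuit_subset_insert v I huv
      · have hur : δ u + Q.indicator 1 u ≤ r := by simpa [hvQ, ← hδ] using hxr
        exact N.mem_closure_of_mem' ⟨hvJ, hur⟩ (N.mem_ground_of_mem_closure hv.1)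
      · have hle : δ u ≤ δ x := (h.le_add_one v hv u huI huv).trans_eq hδ.symm
        by_cases huQ : u ∈ Q
        · have hne : δ u ≠ δ x := fun heq ↦ hux (h.injOn huQ hxQ heq)
          exact ih _ (hle.lt_of_ne hne) huI (hle.trans hxr) rfl
        · have hur : δ u + Q.indicator 1 u ≤ r := by simpa [huQ] using hle.trans hxr
          exact N.mem_closure_of_mem' ⟨h.sdiff_subset ⟨huI, huQ⟩, hur⟩
            (h.indep.subset_ground huI)
    · have hxr' : δ x + Q.indicator 1 x ≤ r := by simpa [hxQ] using hxr
      exact N.mem_closure_of_mem' ⟨h.sdiff_subset ⟨hx, hxQ⟩, hxr'⟩ (h.indep.subset_ground hx)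

lemma subset_closure (h : ShortestExchange N I J Q δ) : I ⊆ N.closure J := fun _ hx ↦
  N.closure_subset_closure (Set.sep_subset _ _) (h.mem_closure_of_mem hx le_top)

lemma mem_closure_of_mem_closure (h : ShortestExchange N I J Q δ) (hv : v ∈ N.closure I) :
    v ∈ N.closure {y ∈ J | δ y + Q.indicator 1 y ≤ δ v + 1} := by
  by_cases hvI : v ∈ I
  · exact h.mem_closure_of_mem hvI le_self_add
  · refine mem_closure_of_fundCircuit_sdiff_subset h.indep ⟨hv, hvI⟩ (N.mem_fundCircuit v I)
      fun u hu ↦ ?_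
    have huI : u ∈ I := (N.fundCircuit_subset_insert v I hu.1).resolve_left hu.2
    exact h.mem_closure_of_mem huI (h.le_add_one v ⟨hv, hvI⟩ u huI hu.1)

lemma add_indicator_le_of_mem_fundCircuit (h : ShortestExchange N I J Q δ) (hv : v ∈ N.closure I)
    (hu : u ∈ N.fundCircuit v J) (huv : u ≠ v) : δ u + Q.indicator 1 u ≤ δ v + 1 :=
  (mem_of_mem_fundCircuit_of_mem_closure (h.mem_closure_of_mem_closure hv) (Set.sep_subset _ _)
    hu huv).2

end ShortestExchange

end SingleMatroid

section Distance

variable {α : Type*} {Adj : α → α → Prop} {x y z : α} {n : ℕ}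

lemma reachIn.snoc (h : reachIn Adj n x y) (hyz : Adj y z) : reachIn Adj (n + 1) x z := by
  induction n generalizing x with
  | zero => cases h; exact ⟨z, hyz, rfl⟩
  | succ n ih =>
    obtain ⟨w, hxw, hwy⟩ := h
    exact ⟨w, hxw, ih hwy⟩

lemma ddist_le_of_reachIn (h : reachIn Adj n x y) : ddist Adj x y ≤ n :=
  sInf_le ⟨n, rfl, h⟩

lemma le_ddist_iff {r : ℕ∞} : r ≤ ddist Adj x y ↔ ∀ n : ℕ, reachIn Adj n x y → r ≤ n := by
  simp only [ddist, le_sInf_iff, Set.mem_ofPred_eq]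
  grind

lemma ddist_self : ddist Adj x x = 0 :=
  nonpos_iff_eq_zero.1 (ddist_le_of_reachIn (n := 0) rfl)

lemma ddist_le_ddist_add_one (hyz : Adj y z) : ddist Adj x z ≤ ddist Adj x y + 1 := by
  rw [← tsub_le_iff_right, le_ddist_iff]
  intro n hn
  exact tsub_le_iff_right.2 (ddist_le_of_reachIn (hn.snoc hyz))

lemma le_ddist_of_forall_adj {f : α → ℕ∞} (hf : ∀ y z, Adj y z → f z ≤ f y + 1) :
    f y ≤ f x + ddist Adj x y := by
  suffices h : ∀ n : ℕ, reachIn Adj n x y → f y ≤ f x + n by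
    rw [← tsub_le_iff_left, le_ddist_iff]
    exact fun n hn ↦ tsub_le_iff_left.2 (h n hn)
  intro n hn
  induction n generalizing x with
  | zero => cases hn; simp
  | succ n ih =>
    obtain ⟨w, hxw, hwy⟩ := hn
    calc f y ≤ f w + n := ih hwy
      _ ≤ f x + 1 + n := by gcongr; exact hf x w hxw
      _ = f x + (n + 1 : ℕ) := by push_cast; ring

lemma ddist_getElem_add_le {l : List α} (hl : l.IsChain Adj) {a k : ℕ} (hak : a + k < l.length) :
    ddist Adj x l[a + k] ≤ ddist Adj x l[a] + k := by
  induction k with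
  | zero => simp
  | succ k ih =>
    calc ddist Adj x l[a + (k + 1)] ≤ ddist Adj x l[a + k] + 1 :=
          ddist_le_ddist_add_one (List.isChain_iff_getElem.1 hl (a + k) hak)
      _ ≤ ddist Adj x l[a] + k + 1 := by gcongr; exact ih _
      _ = ddist Adj x l[a] + (k + 1 : ℕ) := by push_cast; ring

lemma ddist_getElem_eq_of_le_ddist_getLast {l : List α} (hl : (x :: l).IsChain Adj)
    (hlast : (l.length : ℕ∞) ≤ ddist Adj x (x :: l)[l.length]) {a : ℕ} (ha : a < l.length + 1) :
    ddist Adj x (x :: l)[a] = a := by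
  apply le_antisymm
  · simpa [ddist_self] using ddist_getElem_add_le (x := x) hl (a := 0) (k := a) (by simpa using ha)
  · obtain ⟨k, hk⟩ := Nat.exists_eq_add_of_le (Nat.le_of_lt_succ ha)
    have hle := ddist_getElem_add_le (x := x) hl (a := a) (k := k) (by simp [← hk])
    simp only [← hk] at hle
    have hcancel : (a : ℕ∞) + k ≤ ddist Adj x (x :: l)[a] + k :=
      calc (a : ℕ∞) + k = l.length := by rw [hk, Nat.cast_add]
        _ ≤ ddist Adj x (x :: l)[l.length] := hlast
        _ ≤ ddist Adj x (x :: l)[a] + k := hle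
    exact (ENat.add_le_add_iff_right (ENat.natCast_ne_top k)).1 hcancel

end Distance

section ConsecutivePairs

variable {α : Type*} {l : List α} {u v : α}

lemma mem_zip_tail_iff_getElem :
    (v, u) ∈ l.zip l.tail ↔ ∃ (a : ℕ) (ha : a + 1 < l.length), l[a] = v ∧ l[a + 1] = u := by
  simp only [List.mem_iff_getElem, List.getElem_zip, List.getElem_tail, List.length_zip,
    List.length_tail, Prod.mk.injEq]
  grind

lemma eq_getLast_or_exists_mem_zip_tail (hl : l ≠ []) (hv : v ∈ l) :
    v = l.getLast hl ∨ ∃ u, (v, u) ∈ l.zip l.tail := by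
  obtain ⟨a, ha, rfl⟩ := List.mem_iff_getElem.1 hv
  by_cases hlast : a + 1 < l.length
  · exact .inr ⟨l[a + 1], mem_zip_tail_iff_getElem.2 ⟨a, hlast, rfl, rfl⟩⟩
  · left
    rw [List.getLast_eq_getElem]
    congr 1
    omega

lemma eq_head_or_exists_mem_zip_tail (hl : l ≠ []) (hu : u ∈ l) :
    u = l.head hl ∨ ∃ v, (v, u) ∈ l.zip l.tail := by
  obtain ⟨_ | a, ha, rfl⟩ := List.mem_iff_getElem.1 hu
  · exact .inl (List.head_eq_getElem hl).symm
  · exact .inr ⟨l[a], mem_zip_tail_iff_getElem.2 ⟨a, ha, rfl, rfl⟩⟩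

lemma length_filter_zip_tail (p : α → Bool) :
    ((l.zip l.tail).filter fun e ↦ p e.2).length = (l.tail.filter p).length := by
  have hsnd : (l.zip l.tail).map Prod.snd = l.tail := List.map_snd_zip (by simp)
  conv_rhs => rw [← hsnd, List.filter_map, List.length_map]
  rfl

end ConsecutivePairs

section ExchangeGraph

variable {V ι : Type*} [DecidableEq V] [Fintype V] [DecidableEq ι] [Fintype ι]
  {M : ι → FinMatroid V} {P : ι → Finset V} {u v x : V}

lemma compAdj_elt_elt_iff (hind : ∀ i, (M i).Indep (P i)) :
    compAdj M P (.elt v) (.elt u) ↔ ∃ i, u ∈ P i ∧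
      v ∈ (M i).toMatroid_s13.closure (P i) \ P i ∧ u ∈ (M i).toMatroid_s13.fundCircuit v (P i) := by
  refine exists_congr fun i ↦ and_congr_right fun hu ↦ ?_
  rw [FinMatroid.not_indep_insert_iff_mem_closure_sdiff (hind i)]
  exact and_congr_right fun hv ↦
    (FinMatroid.mem_fundCircuit_iff_indep_insert_erase (hind i) hv hu).symm

lemma compAdj_elt_snk_iff (hind : ∀ i, (M i).Indep (P i)) {i : ι} :
    compAdj M P (.elt v) (.snk i) ↔ v ∉ (M i).toMatroid_s13.closure (P i) := by
  change v ∉ P i ∧ (M i).Indep (insert v (P i)) ↔ _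
  have hsub := (M i).toMatroid_s13.subset_closure (P i)
  by_cases hv : v ∈ P i
  · simp [hv, hsub (Finset.mem_coe.2 hv)]
  · simp [hv, FinMatroid.indep_insert_iff_notMem_closure (hind i) hv]

lemma le_ddist_src_elt {f : V → ℕ∞} (hsrc : ∀ v ∉ Finset.univ.biUnion P, f v ≤ 1)
    (hadj : ∀ v u, compAdj M P (.elt v) (.elt u) → f u ≤ f v + 1) :
    f x ≤ ddist (compAdj M P) .src (.elt x) := by
  let g : CVert V ι → ℕ∞
    | .elt v => f v
    | .src => 0
    | .snk _ => 0
  have hg : ∀ y z, compAdj M P y z → g z ≤ g y + 1 := by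
    rintro (v | _ | i) (u | _ | i') hyz
    case elt.elt => exact hadj v u hyz
    case src.elt => exact (hsrc u hyz).trans_eq (zero_add 1).symm
    all_goals first | exact zero_le | exact hyz.elim
  simpa [g] using le_ddist_of_forall_adj (x := .src) (y := .elt x) hg

/-- A shortest path `s, v₁, …, v_{l−1}, t_j` from the source to the set of sinks, given by the list
`vs` of its ground elements `v₁, …, v_{l−1}`. That it is shortest is expressed by the lower bound
`l = vs.length + 1` on the distance of every sink. -/
structure IsShortestPath (M : ι → FinMatroid V) (P : ι → Finset V) (vs : List V) (j : ι) :
    Prop where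
  isChain : (CVert.src :: (vs.map CVert.elt ++ [CVert.snk j])).IsChain (compAdj M P)
  le_ddist_snk : ∀ i, ((vs.length + 1 : ℕ) : ℕ∞) ≤ ddist (compAdj M P) .src (.snk i)

namespace IsShortestPath

variable {vs : List V} {j : ι}

lemma head_notMem (h : IsShortestPath M P vs j) (hne : vs ≠ []) :
    vs.head hne ∉ Finset.univ.biUnion P := by
  obtain ⟨w, ws, rfl⟩ := List.exists_cons_of_ne_nil hne
  exact h.isChain.rel

lemma adj_of_mem_zip_tail (h : IsShortestPath M P vs j) (hvu : (v, u) ∈ vs.zip vs.tail) :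
    compAdj M P (.elt v) (.elt u) := by
  obtain ⟨a, ha, rfl, rfl⟩ := mem_zip_tail_iff_getElem.1 hvu
  have hmap := (List.isChain_append.1 h.isChain.tail).1
  exact List.isChain_iff_getElem.1 ((List.isChain_map _).1 hmap) a ha

lemma getLast_adj_snk (h : IsShortestPath M P vs j) (hne : vs ≠ []) :
    compAdj M P (.elt (vs.getLast hne)) (.snk j) :=
  (List.isChain_append.1 h.isChain.tail).2.2 _
    (by simp [List.getLast?_map, List.getLast?_eq_some_getLast hne]) _ rfl

lemma ddist_getElem (h : IsShortestPath M P vs j) {a : ℕ} (ha : a < vs.length) :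
    ddist (compAdj M P) .src (.elt vs[a]) = (a + 1 : ℕ) := by
  have hlast : ((vs.map CVert.elt ++ [CVert.snk j]).length : ℕ∞) ≤ ddist (compAdj M P) .src
      (CVert.src :: (vs.map CVert.elt ++ [CVert.snk j]))[
        (vs.map CVert.elt ++ [CVert.snk j]).length] := by
    simpa using h.le_ddist_snk j
  have hdist :=
    ddist_getElem_eq_of_le_ddist_getLast h.isChain hlast (a := a + 1) (by simpa using ha.le)
  have hget : (vs.map CVert.elt ++ [CVert.snk j])[a]'(by simp; omega) = CVert.elt vs[a] := by
    simp [ha]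
  rwa [List.getElem_cons_succ, hget] at hdist

lemma ddist_eq_add_one_of_mem_zip_tail (h : IsShortestPath M P vs j)
    (hvu : (v, u) ∈ vs.zip vs.tail) :
    ddist (compAdj M P) .src (.elt u) = ddist (compAdj M P) .src (.elt v) + 1 := by
  obtain ⟨a, ha, rfl, rfl⟩ := mem_zip_tail_iff_getElem.1 hvu
  rw [h.ddist_getElem ha, h.ddist_getElem (Nat.lt_of_succ_lt ha)]
  rfl

lemma ddist_le_length (h : IsShortestPath M P vs j) (hv : v ∈ vs) :
    ddist (compAdj M P) .src (.elt v) ≤ vs.length := by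
  obtain ⟨a, ha, rfl⟩ := List.mem_iff_getElem.1 hv
  rw [h.ddist_getElem ha]
  exact_mod_cast ha

lemma nodup (h : IsShortestPath M P vs j) : vs.Nodup := by
  refine List.pairwise_iff_getElem.2 fun a b ha hb hab heq ↦ hab.ne ?_
  have hdist := h.ddist_getElem ha
  rw [heq, h.ddist_getElem hb, Nat.cast_inj] at hdist
  exact (Nat.succ_injective hdist).symm

lemma injOn_ddist (h : IsShortestPath M P vs j) :
    {v | v ∈ vs}.InjOn fun v ↦ ddist (compAdj M P) .src (.elt v) := by
  intro v hv u hu hvu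
  obtain ⟨a, ha, rfl⟩ := List.mem_iff_getElem.1 hv
  obtain ⟨b, hb, rfl⟩ := List.mem_iff_getElem.1 hu
  simp only [h.ddist_getElem ha, h.ddist_getElem hb, Nat.cast_inj, Nat.add_right_cancel_iff] at hvu
  simp only [hvu]

lemma length_le_ddist_of_notMem_closure (h : IsShortestPath M P vs j)
    (hind : ∀ i, (M i).Indep (P i)) {i : ι} (hv : v ∉ (M i).toMatroid_s13.closure (P i)) :
    (vs.length : ℕ∞) ≤ ddist (compAdj M P) .src (.elt v) := by
  have hle := (h.le_ddist_snk i).trans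
    (ddist_le_ddist_add_one ((compAdj_elt_snk_iff hind).2 hv))
  exact (ENat.add_le_add_iff_right ENat.one_ne_top).1 (by exact_mod_cast hle)

end IsShortestPath

end ExchangeGraph

section Update

variable {V ι : Type*} [DecidableEq V] [DecidableEq ι] {P : ι → Finset V} {π : V → ι}
  {vs : List V} {hne : vs ≠ []} {i j : ι} {u v x : V}

lemma mem_updatePartition_of_notMem (hx : x ∈ P i) (hxvs : x ∉ vs) :
    x ∈ updatePartition P π vs hne j i := by
  have hxtail : x ∉ vs.tail := fun h ↦ hxvs (List.mem_of_mem_tail h)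
  simp [updatePartition, hx, hxtail]

lemma mem_updatePartition_of_mem_zip_tail (hvu : (v, u) ∈ vs.zip vs.tail) :
    v ∈ updatePartition P π vs hne j (π u) := by
  refine Finset.mem_union_left _ (Finset.mem_union_right _ ?_)
  simpa using ⟨u, hvu, rfl⟩

lemma getLast_mem_updatePartition : vs.getLast hne ∈ updatePartition P π vs hne j j := by
  simp [updatePartition]

lemma exists_mem_updatePartition (hv : v ∈ vs) : ∃ i, v ∈ updatePartition P π vs hne j i := by
  obtain rfl | ⟨u, hvu⟩ := eq_getLast_or_exists_mem_zip_tail hne hv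
  · exact ⟨j, getLast_mem_updatePartition⟩
  · exact ⟨π u, mem_updatePartition_of_mem_zip_tail hvu⟩

lemma card_updatePartition_le (hnd : vs.Nodup) (htail : ∀ u ∈ vs.tail, u ∈ P (π u)) :
    (updatePartition P π vs hne j i).card ≤ (P i).card + if i = j then 1 else 0 := by
  set removed := vs.tail.filter fun u ↦ π u = i
  set inserted := ((vs.zip vs.tail).filter fun e ↦ π e.2 = i).map Prod.fst
  have hremoved : removed.toFinset ⊆ P i := by
    intro u hu
    obtain ⟨hu, hui⟩ := List.mem_filter.1 (List.mem_toFinset.1 hu)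
    exact of_decide_eq_true hui ▸ htail u hu
  have hcard : inserted.toFinset.card ≤ removed.toFinset.card :=
    calc inserted.toFinset.card ≤ inserted.length := List.toFinset_card_le _
      _ = removed.length := by
          rw [List.length_map]; exact length_filter_zip_tail fun u ↦ π u = i
      _ = removed.toFinset.card := (List.toFinset_card_of_nodup (hnd.tail.filter _)).symm
  calc (updatePartition P π vs hne j i).card
      ≤ (P i \ removed.toFinset).card + inserted.toFinset.card +
          (if i = j then {vs.getLast hne} else ∅ : Finset V).card :=
        (Finset.card_union_le _ _).trans (Nat.add_le_add_right (Finset.card_union_le _ _) _)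
    _ ≤ (P i \ removed.toFinset).card + removed.toFinset.card + if i = j then 1 else 0 := by
        gcongr; split_ifs <;> simp
    _ = (P i).card + if i = j then 1 else 0 := by
        rw [Finset.card_sdiff_add_card_eq_card hremoved]

end Update

section Augmentation

variable {V ι : Type*} [DecidableEq V] [Fintype V] [DecidableEq ι] [Fintype ι]
  {M : ι → FinMatroid V} {P : ι → Finset V} {π : V → ι} {vs : List V} {j : ι}

namespace IsShortestPath

lemma mem_of_mem_tail (h : IsShortestPath M P vs j) (hπ : ∀ i, ∀ v ∈ P i, π v = i) {u : V}
    (hu : u ∈ vs.tail) : u ∈ P (π u) := by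
  obtain ⟨a, ha, rfl⟩ := List.mem_iff_getElem.1 hu
  have ha' : a + 1 < vs.length := by rw [List.length_tail] at ha; omega
  obtain ⟨i, hui, -⟩ := h.adj_of_mem_zip_tail (u := vs.tail[a])
    (mem_zip_tail_iff_getElem.2 ⟨a, ha', rfl, by simp⟩)
  exact hπ i _ hui ▸ hui

lemma shortestExchange_updatePartition (h : IsShortestPath M P vs j)
    (hind : ∀ i, (M i).Indep (P i)) (hπ : ∀ i, ∀ v ∈ P i, π v = i) (hne : vs ≠ []) (i : ι) :
    ShortestExchange (M i).toMatroid_s13 (P i) (updatePartition P π vs hne j i) {v | v ∈ vs}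
      fun v ↦ ddist (compAdj M P) .src (.elt v) where
  indep := (M i).toMatroid_indep_coe_iff.2 (hind i)
  sdiff_subset _ hx := mem_updatePartition_of_notMem hx.1 hx.2
  injOn := h.injOn_ddist
  le_add_one _ hv _ hu huv :=
    ddist_le_ddist_add_one ((compAdj_elt_elt_iff hind).2 ⟨i, hu, hv, huv⟩)
  exists_pred := by
    rintro u ⟨huP : u ∈ P i, hu⟩
    obtain rfl | ⟨v, hvu⟩ := eq_head_or_exists_mem_zip_tail hne hu
    · exact (h.head_notMem hne (Finset.mem_biUnion.2 ⟨i, Finset.mem_univ i, huP⟩)).elim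
    obtain ⟨i', huP', hv, huv⟩ := (compAdj_elt_elt_iff hind).1 (h.adj_of_mem_zip_tail hvu)
    obtain rfl : i' = i := (hπ i' u huP').symm.trans (hπ i u huP)
    have hvJ : v ∈ updatePartition P π vs hne j i' :=
      hπ i' u huP ▸ mem_updatePartition_of_mem_zip_tail hvu
    exact ⟨v, ⟨hvJ, (List.of_mem_zip hvu).1⟩, hv, huv, h.ddist_eq_add_one_of_mem_zip_tail hvu⟩

lemma indep_updatePartition (h : IsShortestPath M P vs j) (hind : ∀ i, (M i).Indep (P i))
    (hπ : ∀ i, ∀ v ∈ P i, π v = i) (hne : vs ≠ []) (i : ι) :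
    (M i).Indep (updatePartition P π vs hne j i) := by
  have hcard := card_updatePartition_le (hne := hne) (j := j) (i := i) h.nodup
    fun _ ↦ h.mem_of_mem_tail hπ
  have hspan := (h.shortestExchange_updatePartition hind hπ hne i).subset_closure
  rw [← FinMatroid.toMatroid_indep_coe_iff]
  by_cases hij : i = j
  · subst hij
    obtain ⟨hlast, hlastI⟩ := h.getLast_adj_snk hne
    refine indep_of_subset_closure_of_encard_le ((M i).toMatroid_indep_coe_iff.2 hlastI) ?_
      (Finset.finite_toSet _) ?_
    · rw [Finset.coe_insert]
      exact Set.insert_subset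
        ((M i).toMatroid_s13.mem_closure_of_mem getLast_mem_updatePartition) hspan
    · rw [Set.encard_coe_eq_coe_finsetCard, Set.encard_coe_eq_coe_finsetCard,
        Finset.card_insert_of_notMem hlast]
      exact_mod_cast (by simpa using hcard)
  · refine indep_of_subset_closure_of_encard_le ((M i).toMatroid_indep_coe_iff.2 (hind i)) hspan
      (Finset.finite_toSet _) ?_
    simpa [Set.encard_coe_eq_coe_finsetCard, hij] using hcard

lemma min_ddist_add_indicator_le_of_adj_updatePartition (h : IsShortestPath M P vs j)
    (hind : ∀ i, (M i).Indep (P i)) (hπ : ∀ i, ∀ v ∈ P i, π v = i) (hne : vs ≠ []) {u v : V}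
    (hvu : compAdj M (updatePartition P π vs hne j) (.elt v) (.elt u)) :
    min (ddist (compAdj M P) .src (.elt u)) vs.length + {v | v ∈ vs}.indicator 1 u ≤
      min (ddist (compAdj M P) .src (.elt v)) vs.length + 1 := by
  have hind' := h.indep_updatePartition hind hπ hne
  obtain ⟨i, hu, hv, huv⟩ := (compAdj_elt_elt_iff hind').1 hvu
  have hlength : min (ddist (compAdj M P) .src (.elt u)) vs.length + {v | v ∈ vs}.indicator 1 u ≤
      vs.length + 1 :=
    add_le_add (min_le_right _ _) (Set.indicator_le_self' (by simp) u)
  refine (le_min ?_ hlength).trans_eq (min_add_add_right _ _ _)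
  by_cases hvI : v ∈ (M i).toMatroid_s13.closure (P i)
  · have huv' : u ≠ v := fun heq ↦ hv.2 (heq ▸ hu)
    have hex := h.shortestExchange_updatePartition hind hπ hne i
    exact (add_le_add_left (min_le_left _ _) _).trans
      (hex.add_indicator_le_of_mem_fundCircuit hvI huv huv')
  · exact hlength.trans (by gcongr; exact h.length_le_ddist_of_notMem_closure hind hvI)

lemma min_ddist_add_indicator_le_ddist_updatePartition (h : IsShortestPath M P vs j)
    (hind : ∀ i, (M i).Indep (P i)) (hπ : ∀ i, ∀ v ∈ P i, π v = i) (hne : vs ≠ []) (x : V) :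
    min (ddist (compAdj M P) .src (.elt x)) vs.length + {v | v ∈ vs}.indicator 1 x ≤
      ddist (compAdj M (updatePartition P π vs hne j)) .src (.elt x) := by
  refine le_ddist_src_elt (f := fun v ↦ min (ddist (compAdj M P) .src (.elt v)) vs.length +
    {v | v ∈ vs}.indicator 1 v) (fun v hv ↦ ?_) fun v u hvu ↦ ?_
  · simp only [Finset.mem_biUnion, Finset.mem_univ, true_and, not_exists] at hv
    have hvvs : v ∉ vs := fun hvvs ↦ (exists_mem_updatePartition hvvs).elim hv
    have hsrc : compAdj M P .src (.elt v) := by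
      intro hvP
      obtain ⟨i, -, hvi⟩ := Finset.mem_biUnion.1 hvP
      exact hv i (mem_updatePartition_of_notMem hvi hvvs)
    have hone : ddist (compAdj M P) .src (.elt v) ≤ 1 := by
      simpa [ddist_self] using ddist_le_ddist_add_one (x := CVert.src) hsrc
    simpa [hvvs] using .inl hone
  · exact (h.min_ddist_add_indicator_le_of_adj_updatePartition hind hπ hne hvu).trans
      (by gcongr; exact le_self_add)

end IsShortestPath

end Augmentation

/-- After augmenting along a shortest `(s,T)`-path `P`, the distance from `s` to every
vertex lying on `P` strictly increases. -/
theorem path_vertices_distance_increases {V ι : Type*} [DecidableEq V] [Fintype V]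
    [DecidableEq ι] [Fintype ι] (M : ι → FinMatroid V) (P : ι → Finset V) (S : Finset V)
    (hind : ∀ i, (M i).Indep (P i)) (hdisj : ∀ i j, i ≠ j → Disjoint (P i) (P j))
    (hS : Finset.univ.biUnion P = S)
    (π : V → ι) (hπ : ∀ i, ∀ v ∈ P i, π v = i)
    (j : ι) (vs : List V) (hne : vs ≠ []) (hnd : vs.Nodup)
    (hchain : List.Chain' (compAdj M P)
      (CVert.src :: (vs.map CVert.elt ++ [CVert.snk j])))
    (hshort : (⨅ i : ι, ddist (compAdj M P) CVert.src (CVert.snk i))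
      = ((vs.length + 1 : ℕ) : ℕ∞)) :
    ∀ v ∈ vs,
      ddist (compAdj M P) CVert.src (CVert.elt v)
        < ddist (compAdj M (updatePartition P π vs hne j)) CVert.src (CVert.elt v) := by
  have hpath : IsShortestPath M P vs j := ⟨hchain, le_iInf_iff.1 hshort.ge⟩
  intro v hv
  have hlength := hpath.ddist_le_length hv
  have hne_top : ddist (compAdj M P) .src (.elt v) ≠ ⊤ := ne_top_of_le_ne_top (by simp) hlength
  have hle := hpath.min_ddist_add_indicator_le_ddist_updatePartition hind hπ hne v
  rw [min_eq_left hlength, Set.indicator_of_mem (s := {v | v ∈ vs}) hv] at hle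
  exact (ENat.add_one_le_iff hne_top).1 hle
end

section
/- Let M_1 = (V, I_1), …, M_k = (V, I_k) be k matroids over a common finite ground set V, and let S_1, …, S_k ⊆ V be pairwise disjoint sets with S_i ∈ I_i for all i ∈ [k] such that, for every i ∈ [k] and every v ∈ V \ (S_1 ∪ ⋯ ∪ S_i), S_i + v ∉ I_i. Then p̄ = |S_1 ∪ ⋯ ∪ S_k| is a 1/2-approximation of the maximum partitionable set size p, i.e., p̄ ≤ p ≤ 2·p̄. -/
/-! Fix a partition `Q` of a partitionable set `T`, and let `U` be the union of the greedy sets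
`P i`. The part of `Q i` outside `U` is independent in `M i` and no larger than `P i`: otherwise
the augmentation axiom would extend `P i` by an element outside `U`. Summing over `i` gives
`|T \ U| ≤ ∑ i, |P i| = |U|`, while `|T ∩ U| ≤ |U|`. -/

section

variable {V ι : Type*} [DecidableEq V] [Fintype V] [DecidableEq ι] [Fintype ι]

theorem FinMatroid.card_le_card_of_forall_not_indep_insert (M : FinMatroid V) {I J : Finset V}
    (hI : M.Indep I) (hJ : M.Indep J) (hmax : ∀ v ∈ J \ I, ¬ M.Indep (insert v I)) :
    J.card ≤ I.card := by
  by_contra! hlt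
  obtain ⟨v, hv, hindep⟩ := M.indep_aug hJ hI hlt
  exact hmax v hv hindep

variable {M : ι → FinMatroid V} {P : ι → Finset V} {S T : Finset V}

theorem Partitionable.subset (hT : Partitionable M T) (hST : S ⊆ T) : Partitionable M S := by
  obtain ⟨Q, hQ, hdisj, rfl⟩ := hT
  refine ⟨fun i ↦ S ∩ Q i, fun i ↦ (M i).indep_subset (hQ i) Finset.inter_subset_right,
    fun i j hij ↦ (hdisj i j hij).mono Finset.inter_subset_right Finset.inter_subset_right, ?_⟩
  rw [← Finset.inter_biUnion, Finset.inter_eq_left.mpr hST]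

theorem Partitionable.card_le_sum_card (hS : Partitionable M S) (hind : ∀ i, (M i).Indep (P i))
    (hmax : ∀ i, ∀ v ∈ S \ P i, ¬ (M i).Indep (insert v (P i))) :
    S.card ≤ ∑ i, (P i).card := by
  obtain ⟨Q, hQ, -, rfl⟩ := hS
  have card_part_le (i : ι) : (Q i).card ≤ (P i).card :=
    (M i).card_le_card_of_forall_not_indep_insert (hind i) (hQ i) fun v hv ↦
      hmax i v (Finset.sdiff_subset_sdiff
        (Finset.subset_biUnion_of_mem Q (Finset.mem_univ i)) subset_rfl hv)
  exact Finset.card_biUnion_le.trans (Finset.sum_le_sum fun i _ ↦ card_part_le i)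

theorem Partitionable.card_le_two_mul_card_biUnion (hT : Partitionable M T)
    (hind : ∀ i, (M i).Indep (P i)) (hdisj : ∀ i j, i ≠ j → Disjoint (P i) (P j))
    (hmax : ∀ i, ∀ v ∉ Finset.univ.biUnion P, ¬ (M i).Indep (insert v (P i))) :
    T.card ≤ 2 * (Finset.univ.biUnion P).card := by
  set U := Finset.univ.biUnion P with hU
  have card_sdiff_le : (T \ U).card ≤ ∑ i, (P i).card :=
    (hT.subset Finset.sdiff_subset).card_le_sum_card hind fun i v hv ↦
      hmax i v (Finset.mem_sdiff.mp (Finset.mem_sdiff.mp hv).1).2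
  calc
    T.card ≤ (T \ U).card + U.card := Finset.card_le_card_sdiff_add_card
    _ ≤ ∑ i, (P i).card + U.card := by gcongr
    _ = U.card + U.card := by rw [hU, Finset.card_biUnion fun i _ j _ ↦ hdisj i j]
    _ = 2 * U.card := (two_mul _).symm

theorem greedy_half_approximation_general (hind : ∀ i, (M i).Indep (P i))
    (hdisj : ∀ i j, i ≠ j → Disjoint (P i) (P j))
    (hmax : ∀ i, ∀ v ∉ Finset.univ.biUnion P, ¬ (M i).Indep (insert v (P i))) :
    (Finset.univ.biUnion P).card
        ≤ sSup {n : ℕ | ∃ T : Finset V, Partitionable M T ∧ T.card = n} ∧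
      sSup {n : ℕ | ∃ T : Finset V, Partitionable M T ∧ T.card = n}
        ≤ 2 * (Finset.univ.biUnion P).card := by
  set cards := {n : ℕ | ∃ T : Finset V, Partitionable M T ∧ T.card = n}
  have greedy_mem : (Finset.univ.biUnion P).card ∈ cards := ⟨_, ⟨P, hind, hdisj, rfl⟩, rfl⟩
  have le_two_mul : ∀ n ∈ cards, n ≤ 2 * (Finset.univ.biUnion P).card := by
    rintro _ ⟨T, hT, rfl⟩
    exact hT.card_le_two_mul_card_biUnion hind hdisj hmax
  exact ⟨le_csSup ⟨_, le_two_mul⟩ greedy_mem, csSup_le ⟨_, greedy_mem⟩ le_two_mul⟩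

end

/-- The greedy algorithm yields a 1/2-approximation of the maximum partitionable set
size: if `S₁, …, S_k` are disjoint independent sets such that for every `i` and every
`v ∉ S₁ ∪ ⋯ ∪ S_i`, `S_i + v` is dependent in `M_i`, then
`p̄ ≤ p ≤ 2·p̄` where `p̄ = |S₁ ∪ ⋯ ∪ S_k|`. -/
theorem greedy_half_approximation {V : Type*} [DecidableEq V] [Fintype V]
    (k : ℕ) (M : Fin k → FinMatroid V) (P : Fin k → Finset V)
    (hind : ∀ i, (M i).Indep (P i))
    (hdisj : ∀ i j, i ≠ j → Disjoint (P i) (P j))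
    (hmax : ∀ i : Fin k, ∀ v : V,
      v ∉ (Finset.univ.filter (fun j => j ≤ i)).biUnion P →
      ¬ (M i).Indep (insert v (P i))) :
    (Finset.univ.biUnion P).card
        ≤ sSup {n : ℕ | ∃ T : Finset V, Partitionable M T ∧ T.card = n} ∧
      sSup {n : ℕ | ∃ T : Finset V, Partitionable M T ∧ T.card = n}
        ≤ 2 * (Finset.univ.biUnion P).card :=
  greedy_half_approximation_general hind hdisj fun i v hv ↦ hmax i v fun hmem ↦
    hv (Finset.biUnion_subset_biUnion_of_subset_left P (Finset.filter_subset _ _) hmem)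
end
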